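/- Let S = (S_n) be a non-degenerate linear recurrence sequence of order r over the ring of integers (or an integral domain of characteristic zero) whose minimal polynomial has distinct roots α_1,…,α_s with multiplicities m_1,…,m_s, Σ m_l = r. Suppose S is a divisibility sequence: S_0 = 0, S_1 = 1, and S_n ∣ S_{mn} for all m, n ≥ 1. Then for all n ≥ 0, S_n divides D_n := n^{Σ_l C(m_l,2)} · ∏_{l=1}^{s} α_l^{C(m_l,2)(n−1)} · ∏_{1 ≤ i < j ≤ s} ((α_j^n − α_i^n)/(α_j − α_i))^{m_i m_j}, where divisibility is in the ring generated by the terms of S and the roots α_l. -/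

import Mathlib

/-!
Let `f = ∏ (X - α_l)^{m_l}`. The sequence `S` defines a linear functional `X^k ↦ S_k` which, by the
recurrence, kills all multiples of `f`. Applying it to `X^{hn} mod f` for `h < r` expresses the
vector `(S_{hn})_h` as a matrix `M_n` of values of impulse sequences times `(S_k)_{k < r}`, where
`r ≥ 2` because `S_0 = 0 ≠ S_1`. Every `S_{hn}` is divisible by `S_n`, so Cramer's rule at the
coordinate `S_1 = 1` gives `S_n ∣ det M_n`.

If `f` has roots `t_0, …, t_{r-1}`, evaluation at these roots shows that `M_n` times the transposed
Vandermonde matrix of `t` is that of `t^n`, so `det M_n` is the product of the quotients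
`(t_j^n - t_i^n) / (t_j - t_i)` over `i < j`. With these quotients written as geometric sums this is
a polynomial identity, so it persists when roots coincide, and each pair of equal roots `α`
contributes `n α^{n-1}`.
-/

section

open Polynomial Finset Matrix

section MonotoneFibers

variable {ι κ : Type*} [LinearOrder ι] [LinearOrder κ]

theorem card_product_fiber_filter_lt [Fintype κ] {π : κ → ι} (hπ : Monotone π) (i j : ι) :
    #{p ∈ ({x | π x = i} : Finset κ) ×ˢ ({y | π y = j} : Finset κ) | p.1 < p.2} =
      if i = j then (#{x | π x = i}).choose 2
      else if i < j then #{x | π x = i} * #{y | π y = j} else 0 := by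
  split_ifs with heq hlt
  · subst heq
    exact card_product_filter_lt
  · rw [filter_true_of_mem, card_product]
    simp only [mem_product, mem_filter_univ]
    rintro p ⟨rfl, rfl⟩
    exact hπ.reflect_lt hlt
  · rw [card_eq_zero, filter_eq_empty_iff]
    simp only [mem_product, mem_filter_univ]
    rintro p ⟨rfl, rfl⟩ hp
    exact hlt (lt_of_le_of_ne (hπ hp.le) heq)

theorem prod_prod_Ioi_comp_of_monotone [Fintype ι] [LocallyFiniteOrderTop ι]
    [Fintype κ] [LocallyFiniteOrderTop κ] {M : Type*} [CommMonoid M]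
    {π : κ → ι} (hπ : Monotone π) (g : ι → ι → M) :
    ∏ x, ∏ y ∈ Ioi x, g (π x) (π y) =
      (∏ i, g i i ^ (#{x | π x = i}).choose 2) *
        ∏ i, ∏ j ∈ Ioi i, g i j ^ (#{x | π x = i} * #{y | π y = j}) := by
  have fiberwise : ∏ x, ∏ y ∈ Ioi x, g (π x) (π y) =
      ∏ i, ∏ j, g i j ^
        #{p ∈ ({x | π x = i} : Finset κ) ×ˢ ({y | π y = j} : Finset κ) | p.1 < p.2} := by
    calc
      _ = ∏ p : κ × κ with p.1 < p.2, g (π p.1) (π p.2) := by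
        rw [prod_filter, Fintype.prod_prod_type]
        simp only [← prod_filter, filter_lt_eq_Ioi]
      _ = ∏ q : ι × ι, ∏ p : κ × κ with p.1 < p.2 ∧ (π p.1, π p.2) = q, g q.1 q.2 := by
        simp only [← filter_filter]
        exact (prod_fiberwise' _ (fun p : κ × κ ↦ (π p.1, π p.2)) fun q ↦ g q.1 q.2).symm
      _ = _ := by
        rw [Fintype.prod_prod_type]
        refine prod_congr rfl fun i _ ↦ prod_congr rfl fun j _ ↦ ?_
        rw [prod_const]
        congr 2
        ext p
        simp [and_comm]
  rw [fiberwise, ← prod_mul_distrib]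
  refine prod_congr rfl fun i _ ↦ ?_
  rw [← mul_prod_erase _ _ (mem_univ i)]
  simp only [card_product_fiber_filter_lt hπ, if_true]
  congr 1
  refine (prod_subset_one_on_sdiff (fun j hj ↦ ?_) (fun j hj ↦ ?_) fun j hj ↦ ?_).symm
  · simpa using (mem_Ioi.1 hj).ne'
  · have hj' : j ≠ i ∧ ¬ i < j := by simpa using hj
    rw [if_neg hj'.1.symm, if_neg hj'.2, pow_zero]
  · rw [if_neg (mem_Ioi.1 hj).ne, if_pos (mem_Ioi.1 hj)]

theorem exists_monotone_card_fiber_eq [Fintype ι] (m : ι → ℕ) :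
    ∃ π : Fin (∑ l, m l) → ι, Monotone π ∧ ∀ l, #{x | π x = l} = m l := by
  let e : Fin (∑ l, m l) ≃o Σₗ l, Fin (m l) :=
    monoEquivOfFin _ ((Fintype.card_sigma (α := fun l ↦ Fin (m l))).trans (by simp))
  refine ⟨fun x ↦ (e x).1, fun x y hxy ↦ ?_, fun l ↦ ?_⟩
  · obtain hlt | ⟨heq, -⟩ := Sigma.lex_iff.1 (e.monotone hxy)
    exacts [hlt.le, heq.le]
  · calc
      _ = Fintype.card {x // (e x).1 = l} := (Fintype.card_subtype _).symm
      _ = Fintype.card {p : Σ l, Fin (m l) // p.1 = l} :=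
        Fintype.card_congr (e.toEquiv.subtypeEquiv fun _ ↦ Iff.rfl)
      _ = m l := by rw [Fintype.card_congr (Equiv.sigmaSubtype l), Fintype.card_fin]

end MonotoneFibers

section UmbralEvaluation

variable {R : Type*}

section Semiring

variable [Semiring R]

/-- The linear functional on polynomials sending `X ^ k` to `S k`. A linear recurrence for `S` says
that this functional vanishes on the multiples of the characteristic polynomial. -/
noncomputable def umbralEval (S : ℕ → R) : R[X] →ₗ[R] R :=
  lsum fun k ↦ LinearMap.toSpanSingleton R R (S k)

/-- `S` satisfies the linear recurrence with characteristic polynomial `f`. -/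
def SatisfiesRecurrence (f : R[X]) (S : ℕ → R) : Prop :=
  ∀ n, ∑ i ∈ range (f.natDegree + 1), f.coeff i * S (n + i) = 0

theorem umbralEval_monomial (S : ℕ → R) (k : ℕ) (a : R) :
    umbralEval S (monomial k a) = a * S k := by
  simp [umbralEval, sum_monomial_index]

theorem umbralEval_X_pow_mul (S : ℕ → R) (k : ℕ) (p : R[X]) :
    umbralEval S (X ^ k * p) = umbralEval (fun i ↦ S (k + i)) p := by
  induction p using Polynomial.induction_on' with
  | add p q hp hq => rw [mul_add, map_add, map_add, hp, hq]
  | monomial i a => rw [X_pow_mul_monomial, umbralEval_monomial, umbralEval_monomial, add_comm i]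

theorem umbralEval_eq_sum_range (S : ℕ → R) {p : R[X]} {r : ℕ} (hp : p.natDegree < r) :
    umbralEval S p = ∑ i ∈ range r, p.coeff i * S i := by
  conv_lhs => rw [p.as_sum_range' r hp]
  simp only [map_sum, umbralEval_monomial]

theorem umbralEval_mul_eq_zero {f : R[X]} {S : ℕ → R} (hrec : SatisfiesRecurrence f S) (q : R[X]) :
    umbralEval S (q * f) = 0 := by
  induction q using Polynomial.induction_on' with
  | add p q hp hq => rw [add_mul, map_add, hp, hq, add_zero]
  | monomial n a =>
    rw [← C_mul_X_pow_eq_monomial, mul_assoc, ← smul_eq_C_mul, map_smul, umbralEval_X_pow_mul,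
      umbralEval_eq_sum_range _ f.natDegree.lt_succ_self, hrec n, smul_zero]

theorem two_le_natDegree_of_recurrence {f : R[X]} (hf : f.Monic) {S : ℕ → R}
    (hrec : SatisfiesRecurrence f S) (hS0 : S 0 = 0) (hS1 : S 1 ≠ 0) : 2 ≤ f.natDegree := by
  by_contra! hlt
  have hlead := hf.coeff_natDegree
  have h1 := hrec (1 - f.natDegree)
  interval_cases f.natDegree <;> simp_all [sum_range_succ]

end Semiring

theorem umbralEval_modByMonic [CommRing R] {f : R[X]} {S : ℕ → R}
    (hrec : SatisfiesRecurrence f S) (p : R[X]) : umbralEval S (p %ₘ f) = umbralEval S p := by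
  rw [modByMonic_eq_sub_mul_div, map_sub, mul_comm, umbralEval_mul_eq_zero hrec, sub_zero]

end UmbralEvaluation

section ImpulseMatrix

variable {R : Type*} [CommRing R]

/-- The matrix whose entry `(h, k)` is the coefficient of `X ^ k` in `X ^ (h * n) mod f`. For `f`
monic of degree `r` this is `X_{hn}^{(k)}`, where `X^{(k)}` is the impulse sequence of the
recurrence with characteristic polynomial `f`. The indices start at `0`: compared with the
`(r - 1) × (r - 1)` matrix `(X_{hn}^{(k)})_{1 ≤ h, k ≤ r - 1}` there is an additional row
`(1, 0, …, 0)`, which leaves the determinant unchanged. -/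
noncomputable def impulseMatrix (f : R[X]) (r n : ℕ) : Matrix (Fin r) (Fin r) R :=
  Matrix.of fun h k ↦ (X ^ (h * n : ℕ) %ₘ f).coeff k

theorem mapMatrix_impulseMatrix {A : Type*} [CommRing A] (φ : R →+* A) {f : R[X]} (hf : f.Monic)
    (r n : ℕ) : φ.mapMatrix (impulseMatrix f r n) = impulseMatrix (f.map φ) r n := by
  ext h k
  simp [impulseMatrix, ← coeff_map, map_modByMonic φ hf]

theorem natDegree_modByMonic_lt_of_pos {f : R[X]} (hf : f.Monic) (hpos : 0 < f.natDegree)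
    (p : R[X]) : (p %ₘ f).natDegree < f.natDegree :=
  natDegree_modByMonic_lt p hf fun h ↦ by simp [h] at hpos

theorem impulseMatrix_mulVec {f : R[X]} (hf : f.Monic) {r : ℕ} (hr : f.natDegree = r) {S : ℕ → R}
    (hrec : SatisfiesRecurrence f S) (n : ℕ) :
    impulseMatrix f r n *ᵥ (fun k ↦ S k) = fun h : Fin r ↦ S (h * n) := by
  subst hr
  ext h
  calc
    _ = ∑ k ∈ range f.natDegree, (X ^ (h * n : ℕ) %ₘ f).coeff k * S k := by
      rw [sum_range]; rfl
    _ = umbralEval S (X ^ (h * n : ℕ)) := by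
      rw [← umbralEval_eq_sum_range S (natDegree_modByMonic_lt_of_pos hf h.pos _),
        umbralEval_modByMonic hrec]
    _ = S (h * n) := by
      rw [← monomial_one_right_eq_X_pow, umbralEval_monomial, one_mul]

theorem dvd_det_mul_of_dvd_mulVec {ι : Type*} [Fintype ι] [DecidableEq ι] (M : Matrix ι ι R)
    (v : ι → R) {d : R} (hd : ∀ i, d ∣ (M *ᵥ v) i) (j : ι) : d ∣ M.det * v j := by
  have cramer : M.adjugate *ᵥ (M *ᵥ v) = M.det • v := by
    rw [mulVec_mulVec, adjugate_mul, smul_mulVec, one_mulVec]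
  rw [← smul_eq_mul, ← Pi.smul_apply, ← cramer]
  exact dvd_sum fun i _ ↦ (hd i).mul_left _

theorem dvd_det_impulseMatrix {f : R[X]} (hf : f.Monic) {r : ℕ} (hr : f.natDegree = r)
    {S : ℕ → R} (hrec : SatisfiesRecurrence f S)
    (hS0 : S 0 = 0) (hS1 : S 1 = 1) {n : ℕ} (hdiv : ∀ k, S n ∣ S (k * n)) :
    S n ∣ (impulseMatrix f r n).det := by
  cases subsingleton_or_nontrivial R
  · exact (Subsingleton.elim _ _).dvd
  have hr2 : 2 ≤ r := hr ▸ two_le_natDegree_of_recurrence hf hrec hS0 (by simp [hS1])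
  have hrow (h : Fin r) : S n ∣ (impulseMatrix f r n *ᵥ fun k ↦ S k) h := by
    rw [impulseMatrix_mulVec hf hr hrec]
    exact hdiv h
  simpa [hS1] using dvd_det_mul_of_dvd_mulVec _ _ hrow ⟨1, hr2⟩

theorem impulseMatrix_mul_vandermonde_transpose {r : ℕ} (t : Fin r → R) (n : ℕ) :
    impulseMatrix (∏ i, (X - C (t i))) r n * (vandermonde t)ᵀ = (vandermonde fun i ↦ t i ^ n)ᵀ := by
  nontriviality R
  set f := ∏ i, (X - C (t i)) with hf
  have hmonic : f.Monic := monic_prod_X_sub_C t univ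
  have hdeg : f.natDegree = r := by simp [hf]
  ext h i
  have hroot : f.eval (t i) = 0 := by
    rw [hf, eval_prod]
    exact prod_eq_zero (mem_univ i) (by simp)
  calc
    _ = ∑ k ∈ range r, (X ^ (h * n : ℕ) %ₘ f).coeff k * t i ^ k := by
      rw [sum_range]; rfl
    _ = (X ^ (h * n : ℕ) %ₘ f).eval (t i) := by
      have := natDegree_modByMonic_lt_of_pos hmonic (hdeg ▸ h.pos) (X ^ (h * n : ℕ))
      rw [eval_eq_sum_range' (hdeg ▸ this)]
    _ = (t i ^ n) ^ (h : ℕ) := by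
      rw [eval, eval₂_modByMonic_eq_self_of_root hroot, ← eval, eval_pow, eval_X, mul_comm, pow_mul]

theorem det_impulseMatrix_of_injective [IsDomain R] {r : ℕ} {t : Fin r → R}
    (ht : Function.Injective t) (n : ℕ) :
    (impulseMatrix (∏ i, (X - C (t i))) r n).det =
      ∏ i, ∏ j ∈ Ioi i, ∑ k ∈ range n, t j ^ k * t i ^ (n - 1 - k) := by
  have hdet := congrArg Matrix.det (impulseMatrix_mul_vandermonde_transpose t n)
  rw [det_mul, det_transpose, det_transpose] at hdet
  refine mul_right_cancel₀ (det_vandermonde_ne_zero_iff.2 ht) (hdet.trans ?_)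
  simp only [det_vandermonde, ← prod_mul_distrib, geom_sum₂_mul]

theorem det_impulseMatrix {r : ℕ} (t : Fin r → R) (n : ℕ) :
    (impulseMatrix (∏ i, (X - C (t i))) r n).det =
      ∏ i, ∏ j ∈ Ioi i, ∑ k ∈ range n, t j ^ k * t i ^ (n - 1 - k) := by
  let φ : MvPolynomial (Fin r) ℤ →+* R := (MvPolynomial.aeval t : _ →ₐ[ℤ] R)
  have hφ (i : Fin r) : φ (MvPolynomial.X i) = t i := MvPolynomial.aeval_X t i
  have generic := congrArg φ (det_impulseMatrix_of_injective MvPolynomial.X_injective n)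
  rw [RingHom.map_det, mapMatrix_impulseMatrix φ (monic_prod_X_sub_C _ _)] at generic
  simpa [Polynomial.map_prod, hφ] using generic

end ImpulseMatrix

section RootsWithMultiplicities

variable {ι R : Type*} [CommRing R]

theorem monic_prod_X_sub_C_pow (s : Finset ι) (m : ι → ℕ) (α : ι → R) :
    (∏ l ∈ s, (X - C (α l)) ^ m l).Monic :=
  monic_prod_of_monic _ _ fun l _ ↦ (monic_X_sub_C (α l)).pow (m l)

theorem natDegree_prod_X_sub_C_pow [Nontrivial R] (s : Finset ι) (m : ι → ℕ) (α : ι → R) :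
    (∏ l ∈ s, (X - C (α l)) ^ m l).natDegree = ∑ l ∈ s, m l := by
  rw [natDegree_prod_of_monic _ _ fun l _ ↦ (monic_X_sub_C (α l)).pow (m l)]
  simp only [(monic_X_sub_C _).natDegree_pow, natDegree_X_sub_C, mul_one]

end RootsWithMultiplicities

section RefinedResultant

variable {ι R : Type*} [LinearOrder ι] [Fintype ι] [LocallyFiniteOrderTop ι]

/-- The refined resultant sequence `D_n` attached to roots `α` with multiplicities `m`. The
quotients `(α_j ^ n - α_i ^ n) / (α_j - α_i)` are written as geometric sums, so that `D_n` makes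
sense over any commutative semiring. The exponent `n - 1` is truncated at `n = 0`; this does not
affect the value, since the factor `n ^ _` vanishes there unless all `(m l).choose 2` are `0`. -/
def refinedResultant [CommSemiring R] (m : ι → ℕ) (α : ι → R) (n : ℕ) : R :=
  (n : R) ^ (∑ l, (m l).choose 2) * (∏ l, α l ^ ((m l).choose 2 * (n - 1))) *
    ∏ i, ∏ j ∈ Ioi i, (∑ k ∈ range n, α j ^ k * α i ^ (n - 1 - k)) ^ (m i * m j)

theorem map_refinedResultant {A : Type*} [CommSemiring R] [CommSemiring A] (φ : R →+* A)
    (m : ι → ℕ) (α : ι → R) (n : ℕ) :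
    φ (refinedResultant m α n) = refinedResultant m (φ ∘ α) n := by
  simp [refinedResultant]

theorem refinedResultant_eq_prod_div [Field R] (m : ι → ℕ) {α : ι → R}
    (hα : Function.Injective α) (n : ℕ) :
    refinedResultant m α n =
      (n : R) ^ (∑ l, (m l).choose 2) * (∏ l, α l ^ ((m l).choose 2 * (n - 1))) *
        ∏ i, ∏ j ∈ Ioi i, ((α j ^ n - α i ^ n) / (α j - α i)) ^ (m i * m j) := by
  refine congrArg _ (prod_congr rfl fun i _ ↦ prod_congr rfl fun j hj ↦ ?_)
  rw [geom₂_sum (hα.ne (mem_Ioi.1 hj).ne')]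

variable [CommRing R]

theorem det_impulseMatrix_eq_refinedResultant (m : ι → ℕ) (α : ι → R) (n : ℕ) :
    (impulseMatrix (∏ l, (X - C (α l)) ^ m l) (∑ l, m l) n).det = refinedResultant m α n := by
  obtain ⟨π, hπ, hcard⟩ := exists_monotone_card_fiber_eq m
  have hroots : ∏ l, (X - C (α l)) ^ m l = ∏ x, (X - C (α (π x))) := by
    simp only [← hcard, ← prod_const]
    exact prod_fiberwise' _ _ _
  rw [hroots, det_impulseMatrix (fun x ↦ α (π x)),
    prod_prod_Ioi_comp_of_monotone hπ fun i j ↦ ∑ k ∈ range n, α j ^ k * α i ^ (n - 1 - k)]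
  simp only [hcard, geom_sum₂_self, refinedResultant, mul_pow, prod_mul_distrib,
    prod_pow_eq_pow_sum, ← pow_mul, mul_comm (n - 1)]

theorem dvd_refinedResultant (m : ι → ℕ) (α : ι → R) {S : ℕ → R}
    (hrec : ∀ n, ∑ i ∈ range (∑ l, m l + 1),
      (∏ l, (X - C (α l)) ^ m l).coeff i * S (n + i) = 0)
    (hS0 : S 0 = 0) (hS1 : S 1 = 1) {n : ℕ} (hdiv : ∀ k, S n ∣ S (k * n)) :
    S n ∣ refinedResultant m α n := by
  cases subsingleton_or_nontrivial R
  · exact (Subsingleton.elim _ _).dvd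
  have hdeg := natDegree_prod_X_sub_C_pow univ m α
  rw [← det_impulseMatrix_eq_refinedResultant]
  exact dvd_det_impulseMatrix (monic_prod_X_sub_C_pow univ m α) hdeg
    (fun k ↦ hdeg.symm ▸ hrec k) hS0 hS1 hdiv

theorem divisibility_sequence_divides_resultant_general (m : ι → ℕ) (α : ι → R) (S : ℕ → R)
    (hrec : ∀ n, ∑ i ∈ range (∑ l, m l + 1),
      (∏ l, (X - C (α l)) ^ m l).coeff i * S (n + i) = 0)
    (hS0 : S 0 = 0) (hS1 : S 1 = 1)
    (hdiv : ∀ n, 1 ≤ n → ∀ k, 1 ≤ k →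
      ∃ t ∈ Subring.closure (Set.range S ∪ Set.range α), S (k * n) = S n * t) (n : ℕ) :
    ∃ t ∈ Subring.closure (Set.range S ∪ Set.range α), refinedResultant m α n = S n * t := by
  let A := Subring.closure (Set.range S ∪ Set.range α)
  let S' (k : ℕ) : A := ⟨S k, Subring.subset_closure (.inl ⟨k, rfl⟩)⟩
  let α' (l : ι) : A := ⟨α l, Subring.subset_closure (.inr ⟨l, rfl⟩)⟩
  have hpoly : (∏ l, (X - C (α' l)) ^ m l).map A.subtype = ∏ l, (X - C (α l)) ^ m l := by
    simp [Polynomial.map_prod, α']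
  have hrec' (k : ℕ) : ∑ i ∈ range (∑ l, m l + 1),
      (∏ l, (X - C (α' l)) ^ m l).coeff i * S' (k + i) = 0 := by
    apply A.subtype_injective
    simpa [← hpoly, S'] using hrec k
  have hdiv' (k : ℕ) : S' n ∣ S' (k * n) := by
    rcases n.eq_zero_or_pos with rfl | hn
    · simp
    rcases k.eq_zero_or_pos with rfl | hk
    · rw [zero_mul, show S' 0 = 0 from Subtype.ext hS0]
      exact dvd_zero _
    obtain ⟨t, ht, h⟩ := hdiv n hn k hk
    exact ⟨⟨t, ht⟩, Subtype.ext h⟩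
  obtain ⟨t, ht⟩ := dvd_refinedResultant m α' hrec' (Subtype.ext hS0) (Subtype.ext hS1) hdiv'
  exact ⟨t, t.2, (map_refinedResultant A.subtype m α' n).symm.trans (congrArg A.subtype ht)⟩

end RefinedResultant

end

/-- A non-degenerate linear recurrence divisibility sequence `S` of order `r`,
with characteristic polynomial `∏ (x - α_l)^{m_l}`, divides the refined resultant sequence
`D_n = n^{Σ C(m_l,2)} · ∏ α_l^{C(m_l,2)(n-1)} · ∏_{i<j} ((α_j^n - α_i^n)/(α_j - α_i))^{m_i m_j}`,
divisibility being taken in the (sub)ring generated by the terms of `S` and the roots `α_l`. -/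
theorem divisibility_sequence_divides_resultant
    {F : Type*} [Field F] [CharZero F]
    (s : ℕ) (m : Fin s → ℕ) (hm : ∀ l, 0 < m l)
    (r : ℕ) (hr : r = ∑ l, m l)
    (α : Fin s → F) (hα0 : ∀ l, α l ≠ 0) (hinj : Function.Injective α)
    (hnd : ∀ i j : Fin s, i ≠ j → ∀ k : ℕ, 1 ≤ k → (α i / α j) ^ k ≠ 1)
    (S : ℕ → F)
    (hSrec : ∀ n : ℕ,
      ∑ i ∈ Finset.range (r + 1),
        (∏ l, (Polynomial.X - Polynomial.C (α l)) ^ m l : Polynomial F).coeff i * S (n + i) = 0)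
    (hS0 : S 0 = 0) (hS1 : S 1 = 1)
    (hdiv : ∀ n, 1 ≤ n → ∀ k, 1 ≤ k →
      ∃ t ∈ Subring.closure (Set.range S ∪ Set.range α), S (k * n) = S n * t) :
    ∀ n : ℕ,
      ∃ t ∈ Subring.closure (Set.range S ∪ Set.range α),
        ((n : F) ^ (∑ l, (m l).choose 2)) *
            (∏ l, α l ^ ((m l).choose 2 * (n - 1))) *
            (∏ i : Fin s, ∏ j ∈ Finset.Ioi i,
              ((α j ^ n - α i ^ n) / (α j - α i)) ^ (m i * m j)) = S n * t := by
  subst hr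
  intro n
  simpa only [refinedResultant_eq_prod_div m hinj] using
    divisibility_sequence_divides_resultant_general m α S hSrec hS0 hS1 hdiv n
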